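/- Let d ≥ 2, let Σ ⊂ GL_d(ℝ) be a compact subset, and let μ₀ be a Borel probability measure supported in Σ which is quasi-irreducible and satisfies L_1(μ₀) > L_2(μ₀). Then (1/n) ∫ log‖gv‖ dμ₀^{*n}(g) converges to L_1(μ₀) uniformly over unit vectors: sup_{v ∈ ℝ^d, ‖v‖=1} | (1/n) ∫ log‖gv‖ dμ₀^{*n}(g) − L_1(μ₀) | → 0 as n → ∞. -/

import Mathlib

open MeasureTheory Filter
open scoped LinearAlgebra.Projectivization

noncomputable section

abbrev GLd (d : ℕ) := GL (Fin d) ℝ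
abbrev Ed (d : ℕ) := EuclideanSpace ℝ (Fin d)
abbrev Pd (d : ℕ) := ℙ ℝ (Ed d)

variable {d : ℕ}

instance : MeasurableSpace (GLd d) := borel _
instance : BorelSpace (GLd d) := ⟨rfl⟩

instance : TopologicalSpace (Pd d) :=
  (instTopologicalSpaceQuotient : TopologicalSpace (Quotient (projectivizationSetoid ℝ (Ed d))))
instance : MeasurableSpace (Pd d) := borel _
instance : BorelSpace (Pd d) := ⟨rfl⟩

/-- The continuous linear map on Euclidean space induced by `g ∈ GL_d(ℝ)`. -/
def glCLM (g : GLd d) : Ed d →L[ℝ] Ed d :=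
  Matrix.toEuclideanCLM (𝕜 := ℝ) (g : Matrix (Fin d) (Fin d) ℝ)

/-- The operator norm of `g ∈ GL_d(ℝ)`. -/
def gnorm (g : GLd d) : ℝ := ‖glCLM g‖

lemma glCLM_leftInv (g : GLd d) (v : Ed d) : glCLM g⁻¹ (glCLM g v) = v := by
  have h : glCLM (d := d) g⁻¹ * glCLM g = 1 := by
    rw [glCLM, glCLM, ← map_mul]
    norm_cast
    rw [inv_mul_cancel g]
    exact map_one _
  calc glCLM g⁻¹ (glCLM g v) = (glCLM g⁻¹ * glCLM g) v := rfl
    _ = v := by rw [h]; rfl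

lemma glLinear_injective (g : GLd d) : Function.Injective (glCLM g).toLinearMap :=
  Function.LeftInverse.injective (g := (glCLM g⁻¹)) (fun v => glCLM_leftInv g v)

/-- The projective action of `g ∈ GL_d(ℝ)` on `ℙ(ℝ^d)`. -/
def pact (g : GLd d) : Pd d → Pd d :=
  Projectivization.map (glCLM g).toLinearMap (glLinear_injective g)

/-- The projective distance `δ` on `ℙ(ℝ^d)`, computed on representatives. -/
def pdelta (x y : Pd d) : ℝ :=
  Real.sqrt (‖x.rep‖ ^ 2 * ‖y.rep‖ ^ 2 - (inner ℝ x.rep y.rep : ℝ) ^ 2) /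
    (‖x.rep‖ * ‖y.rep‖)

/-- Convolution of two measures on `GL_d(ℝ)`. -/
def mconv (μ ν : Measure (GLd d)) : Measure (GLd d) :=
  (μ.prod ν).map (fun p => p.1 * p.2)

/-- `n`-fold convolution power of a measure on `GL_d(ℝ)`. -/
def mconvN (μ : Measure (GLd d)) : ℕ → Measure (GLd d)
  | 0 => Measure.dirac 1
  | n + 1 => if n = 0 then μ else mconv (mconvN μ n) μ

/-- The top Lyapunov exponent of a (compactly supported) measure on `GL_d(ℝ)`. -/
def L1 (μ : Measure (GLd d)) : ℝ :=
  limUnder atTop (fun n : ℕ => (n : ℝ)⁻¹ * ∫ g, Real.log (gnorm g) ∂(mconvN μ n))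

/-- `N₂ g = s₁(g)s₂(g)`, the product of the two largest singular values. -/
def N2 (g : GLd d) : ℝ :=
  sSup { x | ∃ p q : Ed d, ‖p‖ = 1 ∧ ‖q‖ = 1 ∧ (inner ℝ p q : ℝ) = 0 ∧
    x = Real.sqrt (‖glCLM g p‖ ^ 2 * ‖glCLM g q‖ ^ 2 -
      (inner ℝ (glCLM g p) (glCLM g q) : ℝ) ^ 2) }

/-- `L₁(μ) + L₂(μ)`. -/
def L12 (μ : Measure (GLd d)) : ℝ :=
  limUnder atTop (fun n : ℕ => (n : ℝ)⁻¹ * ∫ g, Real.log (N2 g) ∂(mconvN μ n))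

/-- The second Lyapunov exponent. -/
def L2 (μ : Measure (GLd d)) : ℝ := L12 μ - L1 μ

/-- The top Lyapunov exponent of the restriction of `μ` to an (invariant) subspace `V`. -/
def L1rest (μ : Measure (GLd d)) (V : Submodule ℝ (Ed d)) : ℝ :=
  limUnder atTop (fun n : ℕ => (n : ℝ)⁻¹ *
    ∫ g, Real.log ‖LinearMap.toContinuousLinearMap ((glCLM g).toLinearMap.domRestrict V)‖
      ∂(mconvN μ n))

/-- Quasi-irreducibility of a measure on `GL_d(ℝ)`. -/
def QuasiIrreducible (μ : Measure (GLd d)) : Prop :=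
  ¬ ∃ V : Submodule ℝ (Ed d), V ≠ ⊥ ∧ V ≠ ⊤ ∧
    (∀ᵐ g ∂μ, V.map (glCLM g).toLinearMap = V) ∧ L1rest μ V < L1 μ

/-- Irreducibility of a measure on `GL_d(ℝ)`. -/
def Irred (μ : Measure (GLd d)) : Prop :=
  ¬ ∃ V : Submodule ℝ (Ed d), V ≠ ⊥ ∧ V ≠ ⊤ ∧
    (∀ᵐ g ∂μ, V.map (glCLM g).toLinearMap = V)

/-- The Markov operator associated with a measure on `GL_d(ℝ)`. -/
def Qop (μ : Measure (GLd d)) (φ : Pd d → ℝ) : Pd d → ℝ :=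
  fun v => ∫ g, φ (pact g v) ∂μ

/-- The average `α`-Hölder constant of a measure on `GL_d(ℝ)`. -/
def kalpha (α : ℝ) (μ : Measure (GLd d)) : ℝ :=
  sSup { x | ∃ v₁ v₂ : Pd d, v₁ ≠ v₂ ∧
    x = ∫ g, (pdelta (pact g v₁) (pact g v₂) / pdelta v₁ v₂) ^ α ∂μ }

/-- The `α`-Hölder seminorm of an observable on `ℙ(ℝ^d)`. -/
def valpha (α : ℝ) (φ : Pd d → ℝ) : ℝ :=
  sSup { x | ∃ v₁ v₂ : Pd d, v₁ ≠ v₂ ∧ x = |φ v₁ - φ v₂| / pdelta v₁ v₂ ^ α }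

/-- `φ` is `α`-Hölder: `v_α(φ) < ∞`. -/
def IsHolder (α : ℝ) (φ : Pd d → ℝ) : Prop :=
  BddAbove { x | ∃ v₁ v₂ : Pd d, v₁ ≠ v₂ ∧ x = |φ v₁ - φ v₂| / pdelta v₁ v₂ ^ α }

/-- The total variation distance between two finite measures. -/
def tvDist (μ ν : Measure (GLd d)) [IsFiniteMeasure μ] [IsFiniteMeasure ν] : ℝ :=
  ((μ.toSignedMeasure - ν.toSignedMeasure).totalVariation Set.univ).toReal

/-- A measure is compactly supported. -/
def CompactlySupported (μ : Measure (GLd d)) : Prop :=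
  ∃ K : Set (GLd d), IsCompact K ∧ μ Kᶜ = 0

/-- `S` is the (topological) support of `μ`. -/
def IsSupport (μ : Measure (GLd d)) (S : Set (GLd d)) : Prop :=
  μ Sᶜ = 0 ∧ ∀ x ∈ S, ∀ U : Set (GLd d), IsOpen U → x ∈ U → 0 < μ U

/-- A measure `η` on `ℙ(ℝ^d)` is `μ`-stationary. -/
def Stationary (μ : Measure (GLd d)) (η : Measure (Pd d)) : Prop :=
  ∀ φ : Pd d → ℝ, Continuous φ → (∃ C, ∀ v, |φ v| ≤ C) →
    ∫ v, φ v ∂η = ∫ g, ∫ v, φ (pact g v) ∂η ∂μ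


instance instSCGL : SecondCountableTopology (GLd d) := by
  have : SecondCountableTopology (Matrix (Fin d) (Fin d) ℝ) :=
    inferInstanceAs (SecondCountableTopology (Fin d → Fin d → ℝ))
  have : SecondCountableTopology (Matrix (Fin d) (Fin d) ℝ)ᵐᵒᵖ :=
    MulOpposite.opHomeomorph.symm.isEmbedding.secondCountableTopology
  exact (Units.isEmbedding_embedProduct (M := Matrix (Fin d) (Fin d) ℝ)).secondCountableTopology

lemma glCLM_mul (g h : GLd d) (v : Ed d) : glCLM (g * h) v = glCLM g (glCLM h v) := by
  have : glCLM (d := d) (g * h) = glCLM g * glCLM h := by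
    rw [glCLM, glCLM, glCLM, ← map_mul]
    norm_cast
  rw [this]; rfl

lemma glCLM_one (v : Ed d) : glCLM (1 : GLd d) v = v := by
  have : glCLM (1 : GLd d) = 1 := by
    rw [glCLM]; exact map_one _
  rw [this]; rfl

lemma glCLM_ne_zero (g : GLd d) {v : Ed d} (hv : v ≠ 0) : glCLM g v ≠ 0 := by
  intro h
  apply hv
  have := glCLM_leftInv g v
  rw [h, map_zero] at this
  exact this.symm

lemma continuous_glCLM : Continuous (fun g : GLd d => glCLM g) := by
  have h1 : Continuous (fun A : Matrix (Fin d) (Fin d) ℝ => Matrix.toEuclideanCLM (𝕜 := ℝ) A) := by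
    let f : Matrix (Fin d) (Fin d) ℝ →ₗ[ℝ] (Ed d →L[ℝ] Ed d) :=
      { toFun := fun A => Matrix.toEuclideanCLM (𝕜 := ℝ) A
        map_add' := fun A B => map_add _ A B
        map_smul' := fun c A => map_smul _ c A }
    exact f.continuous_of_finiteDimensional
  exact h1.comp Units.continuous_val

/-- The log-growth cocycle. -/
def rho (g : GLd d) (v : Ed d) : ℝ := Real.log ‖glCLM g v‖ - Real.log ‖v‖

lemma rho_mul (g h : GLd d) (v : Ed d) : rho (g * h) v = rho g (glCLM h v) + rho h v := by
  simp only [rho, glCLM_mul]; ring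

lemma rho_zero (g : GLd d) : rho g 0 = 0 := by simp [rho]

lemma rho_one (v : Ed d) : rho (1 : GLd d) v = 0 := by simp [rho, glCLM_one]

lemma rho_smul (g : GLd d) (c : ℝ) (hc : c ≠ 0) (v : Ed d) : rho g (c • v) = rho g v := by
  by_cases hv : v = 0
  · simp [hv]
  · have h1 : ‖glCLM g v‖ ≠ 0 := norm_ne_zero_iff.2 (glCLM_ne_zero g hv)
    have h2 : ‖v‖ ≠ 0 := norm_ne_zero_iff.2 hv
    have h3 : ‖c‖ ≠ 0 := norm_ne_zero_iff.2 hc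
    simp only [rho, map_smul, norm_smul]
    rw [Real.log_mul h3 h1, Real.log_mul h3 h2]; ring

lemma continuous_rho_left (v : Ed d) : Continuous (fun g : GLd d => rho g v) := by
  by_cases hv : v = 0
  · simp only [hv, rho_zero]; exact continuous_const
  · unfold rho
    refine Continuous.sub (Continuous.log ?_ ?_) continuous_const
    · exact ((ContinuousLinearMap.apply ℝ (Ed d) v).continuous.comp continuous_glCLM).norm
    · intro g; exact norm_ne_zero_iff.2 (glCLM_ne_zero g hv)

/-- uniform bound on the growth cocycle -/
def Good (C : ℝ) (g : GLd d) : Prop := ∀ v, |rho g v| ≤ C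

lemma Good.mul {C C' : ℝ} {g h : GLd d} (hg : Good C g) (hh : Good C' h) : Good (C + C') (g * h) := by
  intro v
  rw [rho_mul]
  exact (abs_add_le _ _).trans (add_le_add (hg _) (hh _))

lemma isClosed_good (C : ℝ) : IsClosed {g : GLd d | Good C g} := by
  simp only [Good, Set.ofPred_forall]
  exact isClosed_iInter fun v => isClosed_le (continuous_rho_left v).abs continuous_const

lemma rho_le {g : GLd d} {K : ℝ} (hK : ‖glCLM g‖ ≤ Real.exp K) (hK0 : 0 ≤ K) (v : Ed d) :
    rho g v ≤ K := by
  by_cases hv : v = 0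
  · simpa [hv, rho_zero] using hK0
  · have h1 : 0 < ‖glCLM g v‖ := norm_pos_iff.2 (glCLM_ne_zero g hv)
    have h2 : 0 < ‖v‖ := norm_pos_iff.2 hv
    unfold rho
    have h3 : ‖glCLM g v‖ ≤ Real.exp K * ‖v‖ :=
      ((glCLM g).le_opNorm v).trans (mul_le_mul_of_nonneg_right hK h2.le)
    have h4 := Real.log_le_log h1 h3
    rw [Real.log_mul (Real.exp_pos _).ne' h2.ne', Real.log_exp] at h4
    linarith

lemma exists_good (S : Set (GLd d)) (hS : IsCompact S) : ∃ C : ℝ, 0 ≤ C ∧ ∀ g ∈ S, Good C g := by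
  obtain ⟨K1, hK1⟩ := hS.exists_bound_of_continuousOn (continuous_glCLM (d := d)).continuousOn
  obtain ⟨K2, hK2⟩ := hS.exists_bound_of_continuousOn
    ((continuous_glCLM (d := d)).comp continuous_inv).continuousOn
  refine ⟨max (max K1 K2) 0, le_max_right _ _, fun g hg v => ?_⟩
  set C := max (max K1 K2) 0 with hC
  have hC0 : 0 ≤ C := le_max_right _ _
  have hCe : C ≤ Real.exp C := by linarith [Real.add_one_le_exp C]
  have b1 : rho g v ≤ C := rho_le ((hK1 g hg).trans (by
    refine le_trans ?_ hCe; exact (le_max_left _ _).trans (le_max_left _ _))) hC0 v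
  have b2 : rho g⁻¹ (glCLM g v) ≤ C := rho_le ((hK2 g hg).trans (by
    refine le_trans ?_ hCe; exact (le_max_right _ _).trans (le_max_left _ _))) hC0 _
  have h3 := rho_mul g⁻¹ g v
  rw [inv_mul_cancel, rho_one] at h3
  rw [abs_le]; constructor <;> linarith

section meas
variable (μ : Measure (GLd d)) [IsProbabilityMeasure μ]

lemma mconv_eq (μ ν : Measure (GLd d)) : mconv μ ν = Measure.mconv μ ν := rfl

instance instProbN (n : ℕ) : IsProbabilityMeasure (mconvN μ n) := by
  induction n with
  | zero => rw [mconvN]; infer_instance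
  | succ n ih =>
    rw [mconvN]; split_ifs
    · infer_instance
    · rw [mconv]; exact Measure.isProbabilityMeasure_map (by fun_prop)

lemma mconvN_succ (n : ℕ) : mconvN μ (n + 1) = Measure.mconv (mconvN μ n) μ := by
  rw [mconvN]; split_ifs with h
  · subst h; rw [mconvN, Measure.dirac_one_mconv]
  · rfl

lemma mconvN_one : mconvN μ 1 = μ := by simp [mconvN]

lemma mconvN_add (n m : ℕ) : mconvN μ (n + m) = Measure.mconv (mconvN μ n) (mconvN μ m) := by
  induction m with
  | zero => rw [add_zero, mconvN.eq_1 μ, Measure.mconv_dirac_one]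
  | succ m ih => rw [← add_assoc, mconvN_succ, ih, mconvN_succ, Measure.mconv_assoc]

lemma good_ae {C : ℝ} (hC : ∀ᵐ g ∂μ, Good C g) (n : ℕ) :
    ∀ᵐ g ∂(mconvN μ n), Good (n * C) g := by
  induction n with
  | zero =>
    rw [mconvN, ae_dirac_iff (isClosed_good _).measurableSet]
    intro v; simp [rho_one]
  | succ n ih =>
    rw [mconvN_succ, Measure.mconv, ae_map_iff (by fun_prop) (isClosed_good _).measurableSet]
    have h1 : ∀ᵐ p ∂((mconvN μ n).prod μ), Good (n * C) p.1 :=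
      Measure.quasiMeasurePreserving_fst.ae ih
    have h2 : ∀ᵐ p ∂((mconvN μ n).prod μ), Good C p.2 :=
      Measure.quasiMeasurePreserving_snd.ae hC
    filter_upwards [h1, h2] with p hp1 hp2
    have := hp1.mul hp2
    push_cast
    rwa [add_mul, one_mul]

/-- continuous and a.e. bounded functions -/
lemma integrable_of_bdd (ν : Measure (GLd d)) [IsFiniteMeasure ν] {f : GLd d → ℝ}
    (hf : Continuous f) {K : ℝ} (hK : ∀ᵐ g ∂ν, |f g| ≤ K) : Integrable f ν :=
  Integrable.of_bound hf.aestronglyMeasurable K hK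

lemma integrable_conv (n m : ℕ) {f : GLd d → ℝ} (hf : Integrable f (mconvN μ (n + m))) :
    Integrable (fun p : GLd d × GLd d => f (p.1 * p.2)) ((mconvN μ n).prod (mconvN μ m)) := by
  rw [mconvN_add, Measure.mconv] at hf
  exact (integrable_map_measure hf.1 (by fun_prop)).1 hf

lemma integral_conv (n m : ℕ) {f : GLd d → ℝ} (hf : Integrable f (mconvN μ (n + m))) :
    ∫ g, f g ∂(mconvN μ (n + m)) = ∫ h, ∫ g, f (g * h) ∂(mconvN μ n) ∂(mconvN μ m) := by
  have h1 := integrable_conv μ n m hf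
  rw [mconvN_add, Measure.mconv] at hf ⊢
  rw [integral_map (by fun_prop) hf.1]
  exact integral_prod_symm _ h1

lemma integrable_conv' (n m : ℕ) {f : GLd d → ℝ} (hf : Integrable f (mconvN μ (n + m))) :
    Integrable (fun h => ∫ g, f (g * h) ∂(mconvN μ n)) (mconvN μ m) :=
  (integrable_conv μ n m hf).integral_prod_right

/-- the expected growth -/
def FF (n : ℕ) (v : Ed d) : ℝ := ∫ g, rho g v ∂(mconvN μ n)

lemma integrable_rho {C : ℝ} (hC : ∀ᵐ g ∂μ, Good C g) (n : ℕ) (v : Ed d) : Integrable (fun g => rho g v) (mconvN μ n) :=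
  integrable_of_bdd _ (continuous_rho_left v) (K := n * C)
    ((good_ae μ hC n).mono fun _ hg => hg v)

lemma abs_FF_le {C : ℝ} (hC : ∀ᵐ g ∂μ, Good C g) (n : ℕ) (v : Ed d) : |FF μ n v| ≤ n * C := by
  have := norm_integral_le_of_norm_le_const (μ := mconvN μ n) (f := fun g => rho g v) (C := n * C)
    ((good_ae μ hC n).mono fun _ hg => hg v)
  simpa [FF] using this
end meas

section growth
variable (μ : Measure (GLd d)) [IsProbabilityMeasure μ]

lemma inner_rho {C : ℝ} (hC : ∀ᵐ g ∂μ, Good C g) (n : ℕ) (v : Ed d) (h : GLd d) :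
    ∫ g, rho (g * h) v ∂(mconvN μ n) = FF μ n (glCLM h v) + rho h v := by
  simp only [rho_mul]
  rw [integral_add (integrable_rho μ hC n _) (integrable_const _)]
  simp [FF]

lemma integrable_FF {C : ℝ} (hC : ∀ᵐ g ∂μ, Good C g) (n m : ℕ) (v : Ed d) :
    Integrable (fun h => FF μ n (glCLM h v)) (mconvN μ m) := by
  have h1 := integrable_conv' μ n m (integrable_rho μ hC (n + m) v)
  have h2 := h1.sub (integrable_rho μ hC m v)
  refine h2.congr (Eventually.of_forall fun h => ?_)
  simp only [Pi.sub_apply]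
  rw [inner_rho μ hC]; ring

lemma FF_add {C : ℝ} (hC : ∀ᵐ g ∂μ, Good C g) (n m : ℕ) (v : Ed d) :
    FF μ (n + m) v = FF μ m v + ∫ h, FF μ n (glCLM h v) ∂(mconvN μ m) := by
  have h1 := integral_conv μ n m (integrable_rho μ hC (n + m) v)
  simp only [inner_rho μ hC] at h1
  rw [integral_add (integrable_FF μ hC n m v) (integrable_rho μ hC m v)] at h1
  rw [FF, h1, add_comm]; rfl

lemma FF_zero (v : Ed d) : FF μ 0 v = 0 := by
  have : Measurable (fun g : GLd d => rho g v) := (continuous_rho_left v).measurable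
  rw [FF, mconvN, integral_dirac' _ _ this.stronglyMeasurable, rho_one]

/-- the infimum of expected growth -/
def aa (n : ℕ) : ℝ := ⨅ v : {v : Ed d // v ≠ 0}, FF μ n v

lemma aa_le {C : ℝ} (hC : ∀ᵐ g ∂μ, Good C g) (n : ℕ) {v : Ed d} (hv : v ≠ 0) :
    aa μ n ≤ FF μ n v := by
  refine ciInf_le ⟨-(n * C), ?_⟩ (⟨v, hv⟩ : {v : Ed d // v ≠ 0})
  rintro _ ⟨w, rfl⟩
  exact neg_le_of_abs_le (abs_FF_le μ hC n w)

lemma le_aa [Nontrivial (Ed d)] (n : ℕ) {x : ℝ} (h : ∀ v : Ed d, v ≠ 0 → x ≤ FF μ n v) :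
    x ≤ aa μ n := by
  obtain ⟨w, hw⟩ := exists_ne (0 : Ed d)
  have : Nonempty {v : Ed d // v ≠ 0} := ⟨⟨w, hw⟩⟩
  exact le_ciInf fun v => h v v.2

lemma exists_lt_aa [Nontrivial (Ed d)] (n : ℕ) : ∃ v : Ed d, v ≠ 0 ∧ FF μ n v ≤ aa μ n + 1 := by
  by_contra! h
  have := le_aa μ n (x := aa μ n + 1) fun v hv => (h v hv).le
  linarith

lemma aa_super [Nontrivial (Ed d)] {C : ℝ} (hC : ∀ᵐ g ∂μ, Good C g) :
    Subadditive (fun n => - aa μ n) := by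
  intro m n
  suffices aa μ m + aa μ n ≤ aa μ (m + n) by linarith
  refine le_aa μ _ fun v hv => ?_
  rw [FF_add μ hC, add_comm]
  refine add_le_add (aa_le μ hC n hv) ?_
  have := integral_mono (μ := mconvN μ n) (integrable_const (aa μ m)) (integrable_FF μ hC m n v)
    (fun h => aa_le μ hC m (glCLM_ne_zero h hv))
  simpa using this

/-- the lower growth rate -/
def bb [Nontrivial (Ed d)] {C : ℝ} (hC : ∀ᵐ g ∂μ, Good C g) : ℝ := - (aa_super μ hC).lim

lemma aa_bdd [Nontrivial (Ed d)] {C : ℝ} (hC : ∀ᵐ g ∂μ, Good C g) (hC0 : 0 ≤ C) :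
    BddBelow (Set.range fun n : ℕ => - aa μ n / n) := by
  refine ⟨-C, ?_⟩
  rintro _ ⟨n, rfl⟩
  obtain ⟨w, hw⟩ := exists_ne (0 : Ed d)
  have h1 : aa μ n ≤ n * C := (aa_le μ hC n hw).trans (le_of_abs_le (abs_FF_le μ hC n w))
  rcases Nat.eq_zero_or_pos n with rfl | hn
  · simpa using hC0
  · have : (0:ℝ) < n := by exact_mod_cast hn
    simp only
    rw [le_div_iff₀ this]; linarith

lemma aa_le_bb [Nontrivial (Ed d)] {C : ℝ} (hC : ∀ᵐ g ∂μ, Good C g) (hC0 : 0 ≤ C) (n : ℕ)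
    (hn : n ≠ 0) : aa μ n ≤ n * bb μ hC := by
  have h := (aa_super μ hC).lim_le_div (aa_bdd μ hC hC0) hn
  have : (0:ℝ) < n := by exact_mod_cast Nat.pos_of_ne_zero hn
  rw [le_div_iff₀ this] at h
  unfold bb; linarith

lemma aa_tendsto [Nontrivial (Ed d)] {C : ℝ} (hC : ∀ᵐ g ∂μ, Good C g) (hC0 : 0 ≤ C) :
    Tendsto (fun n : ℕ => aa μ n / n) atTop (nhds (bb μ hC)) := by
  have h := ((aa_super μ hC).tendsto_lim (aa_bdd μ hC hC0)).neg
  refine h.congr fun n => ?_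
  ring

/-- Laplace transform of the growth -/
def GG (t : ℝ) (n : ℕ) (v : Ed d) : ℝ := ∫ g, Real.exp (-t * rho g v) ∂(mconvN μ n)

lemma integrable_GG {C : ℝ} (hC : ∀ᵐ g ∂μ, Good C g) (t : ℝ) (n : ℕ) (v : Ed d) :
    Integrable (fun g => Real.exp (-t * rho g v)) (mconvN μ n) := by
  refine integrable_of_bdd _ (by have := continuous_rho_left v; fun_prop)
    (K := Real.exp (|t| * (n * C))) ?_
  filter_upwards [good_ae μ hC n] with g hg
  rw [abs_of_pos (Real.exp_pos _)]
  refine Real.exp_le_exp.2 ?_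
  calc -t * rho g v ≤ |(-t) * rho g v| := le_abs_self _
    _ = |t| * |rho g v| := by rw [abs_mul, abs_neg]
    _ ≤ _ := mul_le_mul_of_nonneg_left (hg v) (abs_nonneg t)

lemma GG_pow {C : ℝ} (hC : ∀ᵐ g ∂μ, Good C g) (t : ℝ) (m : ℕ) {K : ℝ} (hK0 : 0 ≤ K)
    (hK : ∀ v : Ed d, v ≠ 0 → GG μ t m v ≤ K) (q : ℕ) :
    ∀ v : Ed d, v ≠ 0 → GG μ t (q * m) v ≤ K ^ q := by
  induction q with
  | zero =>
    intro v _
    have : Measurable (fun g : GLd d => Real.exp (-t * rho g v)) :=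
      (by have := continuous_rho_left v; fun_prop : Continuous _).measurable
    rw [zero_mul, GG, mconvN, integral_dirac' _ _ this.stronglyMeasurable, rho_one]
    simp
  | succ q ih =>
    intro v hv
    rw [add_mul, one_mul, GG, integral_conv μ (q * m) m (integrable_GG μ hC t _ v)]
    have hi := integrable_conv' μ (q * m) m (integrable_GG μ hC t _ v)
    have e : ∀ h : GLd d, ∫ g, Real.exp (-t * rho (g * h) v) ∂(mconvN μ (q * m))
        = GG μ t (q * m) (glCLM h v) * Real.exp (-t * rho h v) := by
      intro h
      rw [GG, ← integral_mul_const]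
      congr 1; ext g
      rw [rho_mul, ← Real.exp_add]; ring_nf
    simp only [e] at hi ⊢
    calc _ ≤ ∫ h, K ^ q * Real.exp (-t * rho h v) ∂(mconvN μ m) := by
          refine integral_mono hi ((integrable_GG μ hC t m v).const_mul _) fun h => ?_
          exact mul_le_mul_of_nonneg_right (ih _ (glCLM_ne_zero h hv)) (Real.exp_pos _).le
      _ = K ^ q * GG μ t m v := by rw [integral_const_mul]; rfl
      _ ≤ K ^ q * K := mul_le_mul_of_nonneg_left (hK v hv) (pow_nonneg hK0 _)
      _ = _ := (pow_succ _ _).symm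

lemma GG_le {C : ℝ} (hC : ∀ᵐ g ∂μ, Good C g) (t : ℝ) (ht : 0 ≤ t) (m : ℕ)
    (htm : t * (m * C) ≤ 1) (v : Ed d) (hv : v ≠ 0) :
    GG μ t m v ≤ Real.exp (-t * aa μ m + (t * (m * C)) ^ 2) := by
  have h1 : GG μ t m v ≤ ∫ g, (1 + (t * (m * C)) ^ 2 + -t * rho g v) ∂(mconvN μ m) := by
    refine integral_mono_ae (integrable_GG μ hC t m v)
      ((integrable_const _).add ((integrable_rho μ hC m v).const_mul _)) ?_
    filter_upwards [good_ae μ hC m] with g hg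
    have hb : |-t * rho g v| ≤ t * (m * C) := by
      rw [abs_mul, abs_neg, abs_of_nonneg ht]
      exact mul_le_mul_of_nonneg_left (hg v) ht
    have h2 := Real.abs_exp_sub_one_sub_id_le (hb.trans htm)
    have h3 := le_of_abs_le h2
    have h4 : (-t * rho g v) ^ 2 ≤ (t * (m * C)) ^ 2 := sq_le_sq' (by linarith [neg_le_of_abs_le hb])
      (le_of_abs_le hb)
    linarith
  rw [integral_add (integrable_const _) ((integrable_rho μ hC m v).const_mul _),
    integral_const_mul] at h1
  simp only [integral_const, probReal_univ, one_smul] at h1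
  have h5 : t * aa μ m ≤ t * FF μ m v := mul_le_mul_of_nonneg_left (aa_le μ hC m hv) ht
  have h6 := Real.add_one_le_exp (-t * aa μ m + (t * (m * C)) ^ 2)
  unfold FF at h5
  linarith

/-- concentration from below along a subsequence -/
lemma lower_conc [Nontrivial (Ed d)] {C : ℝ} (hC : ∀ᵐ g ∂μ, Good C g) (hC0 : 0 ≤ C)
    (ε : ℝ) (hε : 0 < ε) (N : ℕ) : ∃ n, N ≤ n ∧ ∀ v : Ed d, v ≠ 0 →
      ∫ g, max (bb μ hC - rho g v / n) 0 ∂(mconvN μ n) ≤ ε := by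
  set β := bb μ hC with hβ
  -- choose m
  obtain ⟨m, hm1, hm⟩ : ∃ m : ℕ, 1 ≤ m ∧ β - ε / 4 < aa μ m / m := by
    have := (aa_tendsto μ hC hC0).eventually (lt_mem_nhds (show β - ε / 4 < bb μ hC by linarith))
    obtain ⟨m, h1, h2⟩ := (this.and (eventually_ge_atTop 1)).exists
    exact ⟨m, h2, h1⟩
  have hmpos : (0:ℝ) < m := by exact_mod_cast hm1
  rw [lt_div_iff₀ hmpos] at hm
  -- choose t
  obtain ⟨t, ht, ht1, ht2⟩ : ∃ t : ℝ, 0 < t ∧ t * (m * C) ≤ 1 ∧ t * (m * C ^ 2) ≤ ε / 4 := by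
    have hb1 : 0 ≤ m * C := by positivity
    have hb2 : 0 ≤ m * C ^ 2 := by positivity
    refine ⟨min (1 / (m * C + 1)) ((ε / 4) / (m * C ^ 2 + 1)), by positivity, ?_, ?_⟩
    · calc _ ≤ 1 / (m * C + 1) * (m * C) := mul_le_mul_of_nonneg_right (min_le_left _ _) hb1
        _ ≤ 1 := by rw [div_mul_eq_mul_div, div_le_one (by positivity)]; linarith
    · calc _ ≤ (ε / 4) / (m * C ^ 2 + 1) * (m * C ^ 2) :=
            mul_le_mul_of_nonneg_right (min_le_right _ _) hb2
        _ ≤ ε / 4 := by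
          rw [div_mul_eq_mul_div, div_le_iff₀ (by positivity)]
          nlinarith
  obtain ⟨q0, hq0⟩ := exists_nat_gt (2 / (ε * t))
  set q := max (max q0 N) 1 with hq
  have hqN : N ≤ q := (le_max_right _ _).trans (le_max_left _ _)
  have hqq : q0 ≤ q := (le_max_left _ _).trans (le_max_left _ _)
  have hq1 : 1 ≤ q := le_max_right _ _
  have hn1 : q ≤ q * m := Nat.le_mul_of_pos_right _ hm1
  refine ⟨q * m, hqN.trans hn1, fun v hv => ?_⟩
  set n := q * m with hn
  have hnpos : (0:ℝ) < n := by exact_mod_cast lt_of_lt_of_le hq1 hn1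
  have hnt : 1 / (n * t) ≤ ε / 2 := by
    have : 2 / (ε * t) < n := hq0.trans_le (by exact_mod_cast hqq.trans hn1)
    rw [div_lt_iff₀ (by positivity)] at this
    rw [div_le_iff₀ (by positivity)]; nlinarith
  have hG := GG_pow μ hC t m (Real.exp_pos _).le (GG_le μ hC t ht.le m ht1) q v hv
  rw [← Real.exp_nat_mul] at hG
  have hint := integrable_GG μ hC t n v
  set A := Real.exp (n * t * (β - ε / 2)) with hA
  have hp : ∀ g : GLd d, max (β - rho g v / n) 0 ≤
      ε / 2 + 1 / (n * t) * (A * Real.exp (-t * rho g v)) := by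
    intro g
    rw [hA, ← Real.exp_add]
    have h1 := Real.add_one_le_exp (n * t * (β - ε / 2) + -t * rho g v)
    refine max_le ?_ (by positivity)
    have h2 : β - rho g v / n - ε / 2 = 1 / (n * t) * (n * t * (β - ε / 2) + -t * rho g v) := by
      field_simp; ring
    have h3 : 1 / (n * t) * (n * t * (β - ε / 2) + -t * rho g v) ≤
      1 / (n * t) * Real.exp (n * t * (β - ε / 2) + -t * rho g v) :=
      mul_le_mul_of_nonneg_left (by linarith) (by positivity)
    linarith
  have hr := integrable_rho μ hC n v
  calc _ ≤ ∫ g, (ε / 2 + 1 / (n * t) * (A * Real.exp (-t * rho g v))) ∂(mconvN μ n) := by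
        refine integral_mono ?_ ((integrable_const _).add ((hint.const_mul _).const_mul _)) hp
        exact ((integrable_const _).sub (hr.div_const _)).sup (integrable_const _)
    _ = ε / 2 + 1 / (n * t) * (A * GG μ t n v) := by
        rw [integral_add (integrable_const _) ((hint.const_mul _).const_mul _),
          integral_const_mul, integral_const_mul]
        simp [GG]
    _ ≤ ε / 2 + 1 / (n * t) * 1 := by
        gcongr
        calc A * GG μ t n v ≤ A * Real.exp (q * (-t * aa μ m + (t * (m * C)) ^ 2)) :=
              mul_le_mul_of_nonneg_left hG (Real.exp_pos _).le
          _ ≤ 1 := by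
            rw [hA, ← Real.exp_add, Real.exp_le_one_iff]
            have hnq : (n:ℝ) = q * m := by rw [hn]; push_cast; ring
            rw [hnq]
            have : (q:ℝ) * m * t * (β - ε / 2) + q * (-t * aa μ m + (t * (m * C)) ^ 2)
              = q * t * ((m * (β - ε / 2) - aa μ m) + m * (t * (m * C ^ 2))) := by ring
            rw [this]
            refine mul_nonpos_of_nonneg_of_nonpos (by positivity) ?_
            have := mul_le_mul_of_nonneg_left ht2 hmpos.le
            nlinarith
    _ ≤ ε := by linarith
end growth

section invariant
variable (μ : Measure (GLd d)) [IsProbabilityMeasure μ]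

/-- expected excess of growth above the rate `β` -/
def DD (β : ℝ) (n : ℕ) (v : Ed d) : ℝ := ∫ g, max (rho g v / n - β) 0 ∂(mconvN μ n)

lemma DD_nonneg (β : ℝ) (n : ℕ) (v : Ed d) : 0 ≤ DD μ β n v :=
  integral_nonneg fun _ => le_max_right _ _

lemma integrable_pos {C : ℝ} (hC : ∀ᵐ g ∂μ, Good C g) (β : ℝ) (n m : ℕ) (v : Ed d) :
    Integrable (fun g => max (rho g v / n - β) 0) (mconvN μ m) :=
  (((integrable_rho μ hC m v).div_const _).sub (integrable_const _)).sup (integrable_const _)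

lemma DD_eq {C : ℝ} (hC : ∀ᵐ g ∂μ, Good C g) (β : ℝ) (n : ℕ) (v : Ed d) :
    DD μ β n v = FF μ n v / n - β + ∫ g, max (β - rho g v / n) 0 ∂(mconvN μ n) := by
  have hr := (integrable_rho μ hC n v).div_const (n : ℝ)
  have h1 : Integrable (fun g => max (β - rho g v / n) 0) (mconvN μ n) :=
    ((integrable_const _).sub hr).sup (integrable_const _)
  have e : ∀ g : GLd d, max (rho g v / n - β) 0 =
      (rho g v / n - β) + max (β - rho g v / n) 0 := by
    intro g
    rcases le_total (rho g v / n) β with h | h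
    · rw [max_eq_right (by linarith), max_eq_left (by linarith)]; ring
    · rw [max_eq_left (by linarith), max_eq_right (by linarith)]; ring
  unfold DD
  simp only [e]
  have h2 : Integrable (fun g => rho g v / n - β) (mconvN μ n) := hr.sub (integrable_const _)
  rw [integral_add h2 h1, integral_sub hr (integrable_const _), integral_div]
  simp [FF]

lemma FF_shift_le {C : ℝ} (hC : ∀ᵐ g ∂μ, Good C g) (N i : ℕ) (v : Ed d) :
    FF μ (N + i) v ≤ FF μ N v + i * C := by
  rw [add_comm, FF_add μ hC]
  have := integral_mono (μ := mconvN μ N) (integrable_FF μ hC i N v) (integrable_const (i * C))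
    (fun h => le_of_abs_le (abs_FF_le μ hC i (glCLM h v)))
  simp only [integral_const, probReal_univ, one_smul] at this
  linarith

lemma sum_shift (f : ℕ → ℝ) (N m : ℕ) :
    ∑ j ∈ Finset.range N, (f (m + j) - f j) = ∑ i ∈ Finset.range m, (f (N + i) - f i) := by
  have h1 := Finset.sum_range_add f N m
  have h2 := Finset.sum_range_add f m N
  rw [add_comm] at h2
  rw [Finset.sum_sub_distrib, Finset.sum_sub_distrib]
  linarith

lemma avg_bound {C : ℝ} (hC : ∀ᵐ g ∂μ, Good C g) (hC0 : 0 ≤ C) (N m : ℕ) (v : Ed d) :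
    ∑ j ∈ Finset.range N, (FF μ (m + j) v - FF μ j v) ≤ m * FF μ N v + 2 * C * m ^ 2 := by
  rw [sum_shift (fun n => FF μ n v)]
  have : ∀ i ∈ Finset.range m, FF μ (N + i) v - FF μ i v ≤ FF μ N v + 2 * C * m := by
    intro i hi
    have hi' : (i : ℝ) ≤ m := by exact_mod_cast (Finset.mem_range.1 hi).le
    have h1 := FF_shift_le μ hC N i v
    have h2 := neg_le_of_abs_le (abs_FF_le μ hC i v)
    nlinarith
  refine (Finset.sum_le_sum this).trans ?_
  simp only [Finset.sum_const, Finset.card_range, nsmul_eq_mul]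
  apply le_of_eq; ring

lemma exists_avg [Nontrivial (Ed d)] {C : ℝ} (hC : ∀ᵐ g ∂μ, Good C g) (hC0 : 0 ≤ C)
    (nk : ℕ → ℕ) (hnk : ∀ k, 1 ≤ nk k) (K : ℕ) :
    ∃ w : Ed d, w ≠ 0 ∧ ∑ k ∈ Finset.range K, (FF μ (nk k) w / nk k - bb μ hC) ≤ 1 := by
  by_contra! hcon
  set β := bb μ hC with hβ
  obtain ⟨N, hN⟩ := exists_nat_gt (∑ k ∈ Finset.range K, (1 + 2 * C * nk k))
  have hN0 : N ≠ 0 := by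
    rintro rfl
    have : 0 ≤ ∑ k ∈ Finset.range K, (1 + 2 * C * nk k) :=
      Finset.sum_nonneg fun k _ => by positivity
    simp only [Nat.cast_zero] at hN; linarith
  obtain ⟨v, hv, hvN⟩ := exists_lt_aa μ N
  have hvN' : FF μ N v ≤ N * β + 1 := hvN.trans (by linarith [aa_le_bb μ hC hC0 N hN0])
  -- for every j
  have hj : ∀ j ∈ Finset.range N, (1:ℝ) ≤
      ∑ k ∈ Finset.range K, ((FF μ (nk k + j) v - FF μ j v) / nk k - β) := by
    intro j _
    have hi : ∀ k ∈ Finset.range K,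
        Integrable (fun h => FF μ (nk k) (glCLM h v) / nk k - β) (mconvN μ j) :=
      fun k _ => ((integrable_FF μ hC (nk k) j v).div_const _).sub (integrable_const _)
    have h1 := integral_mono (μ := mconvN μ j) (integrable_const (1:ℝ))
      (integrable_finsetSum _ hi) (fun h => (hcon _ (glCLM_ne_zero h hv)).le)
    rw [integral_finsetSum _ hi] at h1
    simp only [integral_const, probReal_univ, one_smul] at h1
    refine h1.trans (le_of_eq (Finset.sum_congr rfl fun k _ => ?_))
    rw [integral_sub ((integrable_FF μ hC (nk k) j v).div_const _) (integrable_const _),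
      integral_div, FF_add μ hC]
    simp
  have h2 := Finset.sum_le_sum hj
  simp only [Finset.sum_const, Finset.card_range, nsmul_eq_mul, mul_one] at h2
  rw [Finset.sum_comm] at h2
  have h3 : ∀ k ∈ Finset.range K, ∑ j ∈ Finset.range N,
      ((FF μ (nk k + j) v - FF μ j v) / nk k - β) ≤ 1 + 2 * C * nk k := by
    intro k _
    have hp : (0:ℝ) < nk k := by exact_mod_cast hnk k
    rw [Finset.sum_sub_distrib, ← Finset.sum_div]
    simp only [Finset.sum_const, Finset.card_range, nsmul_eq_mul]
    have h4 := avg_bound μ hC hC0 N (nk k) v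
    have h5 : (∑ j ∈ Finset.range N, (FF μ (nk k + j) v - FF μ j v)) / nk k
        ≤ FF μ N v + 2 * C * nk k := by
      rw [div_le_iff₀ hp]; nlinarith
    linarith
  have := h2.trans (Finset.sum_le_sum h3)
  linarith

lemma DD_smul (β : ℝ) (n : ℕ) (c : ℝ) (hc : c ≠ 0) (v : Ed d) :
    DD μ β n (c • v) = DD μ β n v := by
  simp only [DD, rho_smul _ c hc]

lemma continuous_DD {C : ℝ} (hC : ∀ᵐ g ∂μ, Good C g) (β : ℝ) (n : ℕ) :
    Continuous (fun v : Metric.sphere (0 : Ed d) 1 => DD μ β n v) := by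
  unfold DD
  refine continuous_of_dominated (bound := fun _ => |(n:ℝ) * C / n| + |β|) ?_ ?_ ?_ ?_
  · intro v
    exact (integrable_pos μ hC β n n (v : Ed d)).1
  · intro v
    filter_upwards [good_ae μ hC n] with g hg
    have h1 : |rho g v / n| ≤ |(n:ℝ) * C / n| := by
      rw [abs_div, abs_div]
      exact div_le_div_of_nonneg_right ((hg v).trans (le_abs_self _)) (abs_nonneg _)
    rw [Real.norm_eq_abs, abs_of_nonneg (le_max_right _ _)]
    refine max_le ?_ (by positivity)
    linarith [le_abs_self (rho g v / n), neg_abs_le β]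
  · exact integrable_const _
  · refine Eventually.of_forall fun g => ?_
    have hne : ∀ v : Metric.sphere (0 : Ed d) 1, (v : Ed d) ≠ 0 := by
      intro v hv
      have := v.2
      simp [hv] at this
    have : Continuous (fun v : Metric.sphere (0 : Ed d) 1 => rho g v) := by
      unfold rho
      refine Continuous.sub (Continuous.log (by fun_prop) fun v => ?_)
        (Continuous.log (by fun_prop) fun v => ?_)
      · exact norm_ne_zero_iff.2 (glCLM_ne_zero g (hne v))
      · exact norm_ne_zero_iff.2 (hne v)
    fun_prop

lemma exists_summable [Nontrivial (Ed d)] {C : ℝ} (hC : ∀ᵐ g ∂μ, Good C g) (hC0 : 0 ≤ C)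
    (nk : ℕ → ℕ) (hnk : ∀ k, 1 ≤ nk k)
    (hγ : ∀ k, ∀ v : Ed d, v ≠ 0 →
      ∫ g, max (bb μ hC - rho g v / nk k) 0 ∂(mconvN μ (nk k)) ≤ (1 / 2 : ℝ) ^ k) :
    ∃ w : Ed d, w ≠ 0 ∧ Summable (fun k => DD μ (bb μ hC) (nk k) w) := by
  set β := bb μ hC with hβ
  let T : ℕ → Set (Metric.sphere (0 : Ed d) 1) :=
    fun K => {v | ∑ k ∈ Finset.range K, DD μ β (nk k) v ≤ 3}
  have hTc : ∀ K, IsClosed (T K) := fun K =>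
    isClosed_le (continuous_finsetSum _ fun k _ => continuous_DD μ hC β (nk k)) continuous_const
  have hTn : ∀ K, (T K).Nonempty := by
    intro K
    obtain ⟨w, hw, h⟩ := exists_avg μ hC hC0 nk hnk K
    have hwn : ‖w‖ ≠ 0 := norm_ne_zero_iff.2 hw
    refine ⟨⟨‖w‖⁻¹ • w, ?_⟩, ?_⟩
    · simp [norm_smul, hwn]
    · show ∑ k ∈ Finset.range K, DD μ β (nk k) (‖w‖⁻¹ • w) ≤ 3
      simp only [DD_smul μ β _ _ (inv_ne_zero hwn)]
      have h1 : ∀ k ∈ Finset.range K, DD μ β (nk k) w ≤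
          (FF μ (nk k) w / nk k - β) + (1 / 2 : ℝ) ^ k := by
        intro k _
        rw [DD_eq μ hC]
        linarith [hγ k w hw]
      refine (Finset.sum_le_sum h1).trans ?_
      rw [Finset.sum_add_distrib]
      have h2 : ∑ k ∈ Finset.range K, (1 / 2 : ℝ) ^ k ≤ 2 := by
        have := summable_geometric_two.sum_le_tsum (Finset.range K) (fun _ _ => by positivity)
        rwa [tsum_geometric_two] at this
      linarith
  have hTm : ∀ K, T (K + 1) ⊆ T K := by
    intro K v hv
    have hv' : ∑ k ∈ Finset.range (K + 1), DD μ β (nk k) v ≤ 3 := hv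
    rw [Finset.sum_range_succ] at hv'
    show ∑ k ∈ Finset.range K, DD μ β (nk k) v ≤ 3
    linarith [DD_nonneg μ β (nk K) v]
  obtain ⟨w, hw⟩ := IsCompact.nonempty_iInter_of_sequence_nonempty_isCompact_isClosed T hTm hTn
    (hTc 0).isCompact hTc
  refine ⟨w, ?_, ?_⟩
  · intro h
    have := w.2
    simp [h] at this
  · exact summable_of_sum_range_le (fun k => DD_nonneg μ β (nk k) w)
      (fun K => Set.mem_iInter.1 hw K)

lemma rho_add_le (g : GLd d) {v w : Ed d} (hv : v ≠ 0) (hw : w ≠ 0) (hvw : v + w ≠ 0) :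
    rho g (v + w) ≤ max (rho g v) (rho g w) +
      (Real.log 2 + |Real.log ‖v‖| + |Real.log ‖w‖| + |Real.log ‖v + w‖|) := by
  have p1 : 0 < ‖glCLM g v‖ := norm_pos_iff.2 (glCLM_ne_zero g hv)
  have p2 : 0 < ‖glCLM g w‖ := norm_pos_iff.2 (glCLM_ne_zero g hw)
  have p3 : 0 < ‖glCLM g (v + w)‖ := norm_pos_iff.2 (glCLM_ne_zero g hvw)
  have hn : ‖glCLM g (v + w)‖ ≤ ‖glCLM g v‖ + ‖glCLM g w‖ := by
    rw [map_add]; exact norm_add_le _ _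
  have a1 := le_abs_self (Real.log ‖v‖)
  have a2 := le_abs_self (Real.log ‖w‖)
  have a3 := neg_abs_le (Real.log ‖v + w‖)
  have b1 := abs_nonneg (Real.log ‖v‖)
  have b2 := abs_nonneg (Real.log ‖w‖)
  rcases le_total ‖glCLM g v‖ ‖glCLM g w‖ with h | h
  · have h1 := Real.log_le_log p3 (hn.trans (by linarith : _ ≤ 2 * ‖glCLM g w‖))
    rw [Real.log_mul two_ne_zero p2.ne'] at h1
    have := le_max_right (rho g v) (rho g w)
    unfold rho at *
    linarith
  · have h1 := Real.log_le_log p3 (hn.trans (by linarith : _ ≤ 2 * ‖glCLM g v‖))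
    rw [Real.log_mul two_ne_zero p1.ne'] at h1
    have := le_max_left (rho g v) (rho g w)
    unfold rho at *
    linarith

lemma DD_add_le {C : ℝ} (hC : ∀ᵐ g ∂μ, Good C g) (β : ℝ) {v w : Ed d} (hv : v ≠ 0) (hw : w ≠ 0)
    (hvw : v + w ≠ 0) : ∃ c : ℝ, ∀ n : ℕ,
      DD μ β n (v + w) ≤ DD μ β n v + DD μ β n w + c * (n : ℝ)⁻¹ := by
  refine ⟨(Real.log 2 + |Real.log ‖v‖| + |Real.log ‖w‖| + |Real.log ‖v + w‖|), fun n => ?_⟩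
  set c := (Real.log 2 + |Real.log ‖v‖| + |Real.log ‖w‖| + |Real.log ‖v + w‖|) with hc
  have hc0 : 0 ≤ c := by have := Real.log_nonneg (one_le_two); positivity
  have i1 := integrable_pos μ hC β n n v
  have i2 := integrable_pos μ hC β n n w
  have h := integral_mono (integrable_pos μ hC β n n (v + w))
    ((i1.add i2).add (integrable_const (c * (n:ℝ)⁻¹))) (fun g => by
      simp only [Pi.add_apply]
      have h1 := rho_add_le g hv hw hvw
      rw [← hc] at h1
      have hn : (0:ℝ) ≤ (n:ℝ)⁻¹ := by positivity
      have hcn : 0 ≤ c * (n:ℝ)⁻¹ := by positivity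
      have h2 := mul_le_mul_of_nonneg_right h1 hn
      have m1 := le_max_left (rho g v / n - β) 0
      have m2 := le_max_left (rho g w / n - β) 0
      have m3 := le_max_right (rho g v / n - β) 0
      have m4 := le_max_right (rho g w / n - β) 0
      refine max_le ?_ (by linarith)
      simp only [div_eq_mul_inv] at *
      rcases max_cases (rho g v) (rho g w) with ⟨e, _⟩ | ⟨e, _⟩ <;> rw [e] at h2 <;> linarith)
  rw [integral_add' (i1.add i2) (integrable_const _), integral_add' i1 i2] at h
  simpa [DD] using h

/-- the slow subspace -/
def slow {C : ℝ} (hC : ∀ᵐ g ∂μ, Good C g) (β : ℝ) (nk : ℕ → ℕ)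
    (hs : Summable fun k => (nk k : ℝ)⁻¹) : Submodule ℝ (Ed d) where
  carrier := {v | v = 0 ∨ Summable (fun k => DD μ β (nk k) v)}
  zero_mem' := Or.inl rfl
  add_mem' := by
    intro v w hv hw
    by_cases hv0 : v = 0
    · simpa [hv0] using hw
    by_cases hw0 : w = 0
    · simpa [hw0] using hv
    by_cases hvw : v + w = 0
    · exact Or.inl hvw
    replace hv := hv.resolve_left hv0
    replace hw := hw.resolve_left hw0
    obtain ⟨c, hc⟩ := DD_add_le μ hC β hv0 hw0 hvw
    exact Or.inr (Summable.of_nonneg_of_le (fun k => DD_nonneg μ β _ _) (fun k => hc (nk k))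
      ((hv.add hw).add (hs.mul_left c)))
  smul_mem' := by
    intro c v hv
    by_cases hc : c = 0
    · left; simp [hc]
    rcases hv with rfl | hv
    · left; simp
    · right; simpa only [DD_smul μ β _ c hc] using hv

lemma aesm_DD (β : ℝ) (n : ℕ) (v : Ed d) (ν : Measure (GLd d)) :
    AEStronglyMeasurable (fun h => DD μ β n (glCLM h v)) ν := by
  have h1 : Continuous (fun p : GLd d × GLd d =>
      max ((rho (p.1 * p.2) v - rho p.2 v) / n - β) 0) := by
    have c1 := (continuous_rho_left (d := d) v).comp (continuous_mul (M := GLd d))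
    have c2 := (continuous_rho_left (d := d) v).comp (continuous_snd (X := GLd d))
    exact (((c1.sub c2).div_const _).sub continuous_const).max continuous_const
  have h2 := (h1.stronglyMeasurable.integral_prod_left' (μ := mconvN μ n))
  refine h2.aestronglyMeasurable.congr (Eventually.of_forall fun h => ?_)
  simp only [DD, rho_mul]
  congr 1; ext g; ring_nf

lemma pos_shift {x y a β : ℝ} (h : x ≤ y + a) (ha : 0 ≤ a) :
    max (x - β) 0 ≤ max (y - β) 0 + a :=
  max_le (by linarith [le_max_left (y - β) 0]) (by linarith [le_max_right (y - β) 0])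

lemma integral_DD_le {C : ℝ} (hC : ∀ᵐ g ∂μ, Good C g) (hC0 : 0 ≤ C) (β : ℝ) (n : ℕ) (v : Ed d) :
    Integrable (fun h => DD μ β n (glCLM h v)) μ ∧
    ∫ h, DD μ β n (glCLM h v) ∂μ ≤ DD μ β n v + 2 * C * (n : ℝ)⁻¹ := by
  have hf := integrable_pos μ hC β n (n + 1) v
  have hf' : Integrable (fun g => max (rho g v / n - β) 0) (mconvN μ (1 + n)) := by
    rw [add_comm]; exact hf
  have hCn : 0 ≤ C / n := by positivity
  have e1 := integral_conv μ n 1 hf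
  have i1 := integrable_conv' μ n 1 hf
  have e2 := integral_conv μ 1 n hf'
  have i2 := integrable_conv' μ 1 n hf'
  rw [mconvN_one] at e1 i1 e2 i2
  rw [add_comm 1 n] at e2
  -- first bound
  have b1 : ∀ᵐ h ∂μ, DD μ β n (glCLM h v) ≤
      (∫ g, max (rho (g * h) v / n - β) 0 ∂(mconvN μ n)) + C / n := by
    filter_upwards [hC] with h hh
    have ii : Integrable (fun g => max (rho (g * h) v / n - β) 0) (mconvN μ n) := by
      simp only [rho_mul]
      exact ((((integrable_rho μ hC n _).add (integrable_const _)).div_const _).sub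
        (integrable_const _)).sup (integrable_const _)
    have := integral_mono (integrable_pos μ hC β n n (glCLM h v))
      (ii.add (integrable_const (C / n))) (fun g => by
        simp only [Pi.add_apply]
        refine pos_shift ?_ hCn
        rw [rho_mul, ← add_div]
        gcongr
        linarith [neg_le_of_abs_le (hh v)])
    rw [integral_add' ii (integrable_const _)] at this
    simpa [DD] using this
  have j1 : Integrable (fun h => (∫ g, max (rho (g * h) v / n - β) 0 ∂(mconvN μ n)) + C / n) μ :=
    i1.add (integrable_const _)
  have j0 : Integrable (fun h => DD μ β n (glCLM h v)) μ := by
    refine j1.mono' (aesm_DD μ β n v μ) ?_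
    filter_upwards [b1] with h hh
    rwa [Real.norm_eq_abs, abs_of_nonneg (DD_nonneg μ β n _)]
  refine ⟨j0, ?_⟩
  have s1 := integral_mono_ae j0 j1 b1
  rw [integral_add i1 (integrable_const _), ← e1, e2] at s1
  have s2 := integral_mono i2 ((integrable_pos μ hC β n n v).add (integrable_const (C / n)))
    (fun h => by
      simp only [Pi.add_apply]
      have b2 : ∀ᵐ g ∂μ, max (rho (g * h) v / n - β) 0 ≤ max (rho h v / n - β) 0 + C / n := by
        filter_upwards [hC] with g hg
        refine pos_shift ?_ hCn
        rw [rho_mul, ← add_div]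
        refine div_le_div_of_nonneg_right ?_ (by positivity)
        linarith [le_of_abs_le (hg (glCLM h v))]
      by_cases hi : Integrable (fun g => max (rho (g * h) v / n - β) 0) μ
      · have := integral_mono_ae hi (integrable_const _) b2
        simpa using this
      · rw [integral_undef hi]
        have := le_max_right (rho h v / n - β) 0
        linarith)
  rw [integral_add' (integrable_pos μ hC β n n v) (integrable_const _)] at s2
  simp only [integral_const, probReal_univ, one_smul] at s1 s2
  have : 2 * C * (n:ℝ)⁻¹ = C / n + C / n := by ring
  rw [this]
  unfold DD at *
  linarith

lemma slow_ae {C : ℝ} (hC : ∀ᵐ g ∂μ, Good C g) (hC0 : 0 ≤ C) (β : ℝ) (nk : ℕ → ℕ)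
    (hs : Summable fun k => (nk k : ℝ)⁻¹) {v : Ed d} (hv : v ∈ slow μ hC β nk hs) :
    ∀ᵐ h ∂μ, glCLM h v ∈ slow μ hC β nk hs := by
  rcases hv with rfl | hv
  · refine Eventually.of_forall fun h => ?_
    rw [map_zero]; exact Submodule.zero_mem _
  have hlt : ∫⁻ h, ∑' k, ENNReal.ofReal (DD μ β (nk k) (glCLM h v)) ∂μ ≠ ⊤ := by
    rw [lintegral_tsum fun k => (aesm_DD μ β (nk k) v μ).aemeasurable.ennreal_ofReal]
    have e : ∀ k, ∫⁻ h, ENNReal.ofReal (DD μ β (nk k) (glCLM h v)) ∂μ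
        ≤ ENNReal.ofReal (DD μ β (nk k) v + 2 * C * (nk k : ℝ)⁻¹) := by
      intro k
      obtain ⟨h1, h2⟩ := integral_DD_le μ hC hC0 β (nk k) v
      rw [← ofReal_integral_eq_lintegral_ofReal h1
        (Eventually.of_forall fun h => DD_nonneg μ β _ _)]
      exact ENNReal.ofReal_le_ofReal h2
    refine ne_top_of_le_ne_top ?_ (ENNReal.tsum_le_tsum e)
    exact (hv.add (hs.mul_left (2 * C))).tsum_ofReal_ne_top
  have := ae_lt_top' (AEMeasurable.tsum fun k =>
    (aesm_DD μ β (nk k) v μ).aemeasurable.ennreal_ofReal) hlt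
  filter_upwards [this] with h hh
  right
  have h3 := ENNReal.summable_toReal hh.ne
  refine h3.congr fun k => ?_
  rw [ENNReal.toReal_ofReal (DD_nonneg μ β _ _)]

lemma slow_inv {C : ℝ} (hC : ∀ᵐ g ∂μ, Good C g) (hC0 : 0 ≤ C) (β : ℝ) (nk : ℕ → ℕ)
    (hs : Summable fun k => (nk k : ℝ)⁻¹) :
    ∀ᵐ h ∂μ, (slow μ hC β nk hs).map (glCLM h).toLinearMap = slow μ hC β nk hs := by
  set V := slow μ hC β nk hs with hV
  let b := Module.finBasis ℝ V
  have h1 : ∀ᵐ h ∂μ, ∀ i, glCLM h (b i : Ed d) ∈ V :=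
    ae_all_iff.2 fun i => slow_ae μ hC hC0 β nk hs (b i).2
  filter_upwards [h1] with h hh
  have hle : V.map (glCLM h).toLinearMap ≤ V := by
    rw [Submodule.map_le_iff_le_comap]
    intro x hx
    have : (⟨x, hx⟩ : V) ∈ Submodule.comap V.subtype (V.comap (glCLM h).toLinearMap) := by
      have hb : Submodule.span ℝ (Set.range b) ≤
          Submodule.comap V.subtype (V.comap (glCLM h).toLinearMap) := by
        rw [Submodule.span_le]
        rintro _ ⟨i, rfl⟩
        exact hh i
      rw [b.span_eq] at hb
      exact hb trivial
    exact this
  refine Submodule.eq_of_le_of_finrank_eq hle ?_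
  exact (Submodule.equivMapOfInjective _ (glLinear_injective h) V).finrank_eq.symm
end invariant

section rest
/-- norm of the restriction -/
def nr (V : Submodule ℝ (Ed d)) (g : GLd d) : ℝ :=
  ‖LinearMap.toContinuousLinearMap ((glCLM g).toLinearMap.domRestrict V)‖

lemma nr_continuous (V : Submodule ℝ (Ed d)) : Continuous (nr V) := by
  have : nr V = fun g => ‖(glCLM g).comp V.subtypeL‖ := by
    ext g; rfl
  rw [this]
  exact ((continuous_glCLM (d := d)).clm_comp continuous_const).norm

lemma le_nr (V : Submodule ℝ (Ed d)) (g : GLd d) {v : Ed d} (hv : v ∈ V) :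
    ‖glCLM g v‖ ≤ nr V g * ‖v‖ :=
  (LinearMap.toContinuousLinearMap ((glCLM g).toLinearMap.domRestrict V)).le_opNorm ⟨v, hv⟩

lemma nr_pos {V : Submodule ℝ (Ed d)} (hV : V ≠ ⊥) (g : GLd d) : 0 < nr V g := by
  obtain ⟨v, hv, hv0⟩ := Submodule.exists_mem_ne_zero_of_ne_bot hV
  have h := le_nr V g hv
  have p1 : 0 < ‖glCLM g v‖ := norm_pos_iff.2 (glCLM_ne_zero g hv0)
  have p2 : 0 < ‖v‖ := norm_pos_iff.2 hv0
  by_contra! hn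
  have := mul_nonpos_of_nonpos_of_nonneg hn p2.le
  linarith

lemma rho_le_nr {V : Submodule ℝ (Ed d)} (hV : V ≠ ⊥) (g : GLd d) {v : Ed d} (hv : v ∈ V)
    (hv0 : v ≠ 0) : rho g v ≤ Real.log (nr V g) := by
  have p1 : 0 < ‖glCLM g v‖ := norm_pos_iff.2 (glCLM_ne_zero g hv0)
  have p2 : 0 < ‖v‖ := norm_pos_iff.2 hv0
  have h := Real.log_le_log p1 (le_nr V g hv)
  rw [Real.log_mul (nr_pos hV g).ne' p2.ne'] at h
  unfold rho; linarith

lemma nr_le_of {V : Submodule ℝ (Ed d)} (hV : V ≠ ⊥) (g : GLd d) {K : ℝ}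
    (h : ∀ v ∈ V, v ≠ 0 → rho g v ≤ K) : Real.log (nr V g) ≤ K := by
  rw [Real.log_le_iff_le_exp (nr_pos hV g)]
  refine ContinuousLinearMap.opNorm_le_bound _ (Real.exp_pos _).le ?_
  rintro ⟨v, hv⟩
  show ‖glCLM g v‖ ≤ Real.exp K * ‖v‖
  by_cases hv0 : v = 0
  · simp [hv0]
  have p1 : 0 < ‖glCLM g v‖ := norm_pos_iff.2 (glCLM_ne_zero g hv0)
  have p2 : 0 < ‖v‖ := norm_pos_iff.2 hv0
  have h1 := h v hv hv0
  unfold rho at h1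
  rw [← Real.exp_log p1, ← Real.exp_log p2, ← Real.exp_add, Real.exp_le_exp]
  linarith

lemma abs_nr_le {V : Submodule ℝ (Ed d)} (hV : V ≠ ⊥) {g : GLd d} {K : ℝ} (hg : Good K g) :
    |Real.log (nr V g)| ≤ K := by
  rw [abs_le]
  constructor
  · obtain ⟨v, hv, hv0⟩ := Submodule.exists_mem_ne_zero_of_ne_bot hV
    exact (neg_le_of_abs_le (hg v)).trans (rho_le_nr hV g hv hv0)
  · exact nr_le_of hV g fun v _ _ => le_of_abs_le (hg v)

lemma nr_mul_le {V : Submodule ℝ (Ed d)} (hV : V ≠ ⊥) (g h : GLd d)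
    (hh : ∀ v ∈ V, glCLM h v ∈ V) :
    Real.log (nr V (g * h)) ≤ Real.log (nr V g) + Real.log (nr V h) := by
  refine nr_le_of hV _ fun v hv hv0 => ?_
  rw [rho_mul]
  exact add_le_add (rho_le_nr hV g (hh v hv) (glCLM_ne_zero h hv0)) (rho_le_nr hV h hv hv0)

variable (μ : Measure (GLd d)) [IsProbabilityMeasure μ]

lemma inv_ae {V : Submodule ℝ (Ed d)} (hV : ∀ᵐ h ∂μ, ∀ v ∈ V, glCLM h v ∈ V) (n : ℕ) :
    ∀ᵐ h ∂(mconvN μ n), ∀ v ∈ V, glCLM h v ∈ V := by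
  have hcl : IsClosed {h : GLd d | ∀ v ∈ V, glCLM h v ∈ V} := by
    simp only [Set.ofPred_forall]
    refine isClosed_iInter fun v => isClosed_iInter fun _ => ?_
    exact (Submodule.closed_of_finiteDimensional V).preimage
      ((ContinuousLinearMap.apply ℝ (Ed d) v).continuous.comp continuous_glCLM)
  induction n with
  | zero =>
    rw [mconvN, ae_dirac_iff hcl.measurableSet]
    intro v hv; rwa [glCLM_one]
  | succ n ih =>
    rw [mconvN_succ, Measure.mconv, ae_map_iff (by fun_prop) hcl.measurableSet]
    have h1 := (Measure.quasiMeasurePreserving_fst (μ := mconvN μ n) (ν := μ)).ae ih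
    have h2 := (Measure.quasiMeasurePreserving_snd (μ := mconvN μ n) (ν := μ)).ae hV
    filter_upwards [h1, h2] with p hp1 hp2 v hv
    rw [glCLM_mul]
    exact hp1 _ (hp2 _ hv)

/-- expected log norm of the restriction -/
def UU (V : Submodule ℝ (Ed d)) (n : ℕ) : ℝ := ∫ g, Real.log (nr V g) ∂(mconvN μ n)

lemma continuous_log_nr {V : Submodule ℝ (Ed d)} (hV : V ≠ ⊥) :
    Continuous (fun g : GLd d => Real.log (nr V g)) :=
  (nr_continuous V).log fun g => (nr_pos hV g).ne'

lemma integrable_nr {C : ℝ} (hC : ∀ᵐ g ∂μ, Good C g) {V : Submodule ℝ (Ed d)} (hV : V ≠ ⊥)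
    (n : ℕ) : Integrable (fun g => Real.log (nr V g)) (mconvN μ n) :=
  integrable_of_bdd _ (continuous_log_nr hV) ((good_ae μ hC n).mono fun _ hg => abs_nr_le hV hg)

lemma abs_UU_le {C : ℝ} (hC : ∀ᵐ g ∂μ, Good C g) {V : Submodule ℝ (Ed d)} (hV : V ≠ ⊥)
    (n : ℕ) : |UU μ V n| ≤ n * C := by
  have := norm_integral_le_of_norm_le_const (μ := mconvN μ n)
    (f := fun g => Real.log (nr V g)) (C := n * C)
    ((good_ae μ hC n).mono fun _ hg => abs_nr_le hV hg)
  simpa [UU] using this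

lemma UU_sub {C : ℝ} (hC : ∀ᵐ g ∂μ, Good C g) {V : Submodule ℝ (Ed d)} (hV : V ≠ ⊥)
    (hVi : ∀ᵐ h ∂μ, ∀ v ∈ V, glCLM h v ∈ V) : Subadditive (UU μ V) := by
  intro m n
  have hi := integrable_nr μ hC hV (m + n)
  rw [UU, integral_conv μ m n hi]
  have h1 : ∀ᵐ h ∂(mconvN μ n), ∫ g, Real.log (nr V (g * h)) ∂(mconvN μ m)
      ≤ UU μ V m + Real.log (nr V h) := by
    filter_upwards [good_ae μ hC n, inv_ae μ hVi n] with h hg hinv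
    have ii : Integrable (fun g => Real.log (nr V (g * h))) (mconvN μ m) :=
      integrable_of_bdd _ ((continuous_log_nr hV).comp (continuous_mul_const h))
        ((good_ae μ hC m).mono fun g hg' => abs_nr_le hV (hg'.mul hg))
    have := integral_mono ii ((integrable_nr μ hC hV m).add (integrable_const _))
      (fun g => nr_mul_le hV g h hinv)
    rw [integral_add' (integrable_nr μ hC hV m) (integrable_const _)] at this
    simpa [UU] using this
  have h2 := integral_mono_ae (integrable_conv' μ m n hi)
    ((integrable_const _).add (integrable_nr μ hC hV n)) h1
  rw [integral_add' (integrable_const _) (integrable_nr μ hC hV n)] at h2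
  simpa [UU] using h2

lemma UU_tendsto {C : ℝ} (hC : ∀ᵐ g ∂μ, Good C g) (hC0 : 0 ≤ C) {V : Submodule ℝ (Ed d)}
    (hV : V ≠ ⊥) (hVi : ∀ᵐ h ∂μ, ∀ v ∈ V, glCLM h v ∈ V) :
    Tendsto (fun n : ℕ => (n : ℝ)⁻¹ * UU μ V n) atTop (nhds (L1rest μ V)) := by
  have hs := UU_sub μ hC hV hVi
  have hb : BddBelow (Set.range fun n : ℕ => UU μ V n / n) := by
    refine ⟨-C, ?_⟩
    rintro _ ⟨n, rfl⟩
    have h1 := neg_le_of_abs_le (abs_UU_le μ hC hV n)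
    rcases Nat.eq_zero_or_pos n with rfl | hn
    · simpa using hC0
    · have : (0:ℝ) < n := by exact_mod_cast hn
      simp only
      rw [le_div_iff₀ this]; linarith
  have h : Tendsto (fun n : ℕ => (n : ℝ)⁻¹ * UU μ V n) atTop (nhds hs.lim) :=
    (hs.tendsto_lim hb).congr fun n => by rw [div_eq_mul_inv, mul_comm]
  have e : L1rest μ V = hs.lim := h.limUnder_eq
  rw [e]; exact h

lemma nr_top (g : GLd d) : nr ⊤ g = gnorm g := by
  apply le_antisymm
  · refine ContinuousLinearMap.opNorm_le_bound _ (norm_nonneg _) ?_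
    rintro ⟨v, hv⟩
    exact (glCLM g).le_opNorm v
  · refine ContinuousLinearMap.opNorm_le_bound _ (by unfold nr; positivity : 0 ≤ nr ⊤ g) fun v => ?_
    exact le_nr ⊤ g trivial

lemma L1rest_top : L1rest μ ⊤ = L1 μ := by
  have : ∀ n, ∫ g, Real.log (nr ⊤ g) ∂(mconvN μ n) = ∫ g, Real.log (gnorm g) ∂(mconvN μ n) := by
    intro n; simp only [nr_top]
  unfold L1rest L1
  congr 1
  ext n
  rw [← this]; rfl

lemma nr_basis {V : Submodule ℝ (Ed d)} (hV : V ≠ ⊥) :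
    ∃ (s : Finset (Ed d)) (c : ℝ), 0 ≤ c ∧ (∀ e ∈ s, e ∈ V ∧ e ≠ 0) ∧
      ∀ g : GLd d, ∃ e ∈ s, Real.log (nr V g) ≤ rho g e + c := by
  classical
  let b := stdOrthonormalBasis ℝ V
  set r := Module.finrank ℝ V with hr
  have hrpos : 0 < r := by
    rw [hr, Module.finrank_pos_iff]
    exact Submodule.nontrivial_iff_ne_bot.2 hV
  have hn : ∀ i, ‖(b i : Ed d)‖ = 1 := fun i => b.orthonormal.1 i
  have hr1 : (1:ℝ) ≤ r := by exact_mod_cast hrpos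
  refine ⟨Finset.univ.image fun i => (b i : Ed d), Real.log r, Real.log_nonneg hr1, ?_, ?_⟩
  · intro e he
    obtain ⟨i, -, rfl⟩ := Finset.mem_image.1 he
    refine ⟨(b i).2, fun h => ?_⟩
    have := hn i
    rw [h] at this; simp at this
  · intro g
    have : Nonempty (Fin r) := ⟨⟨0, hrpos⟩⟩
    obtain ⟨i0, -, hi0⟩ := Finset.exists_max_image Finset.univ
      (fun i => ‖glCLM g (b i : Ed d)‖) Finset.univ_nonempty
    refine ⟨b i0, Finset.mem_image_of_mem _ (Finset.mem_univ _), ?_⟩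
    have hb0 : (b i0 : Ed d) ≠ 0 := fun h => by
      have := hn i0
      rw [h] at this; simp at this
    have p : 0 < ‖glCLM g (b i0 : Ed d)‖ := norm_pos_iff.2 (glCLM_ne_zero g hb0)
    have key : nr V g ≤ ‖glCLM g (b i0 : Ed d)‖ * r := by
      refine ContinuousLinearMap.opNorm_le_bound _ (by positivity) ?_
      intro x
      show ‖glCLM g (x : Ed d)‖ ≤ _
      have hx : (x : Ed d) = ∑ i, (inner ℝ (b i) x : ℝ) • (b i : Ed d) := by
        conv_lhs => rw [← b.sum_repr' x]
        simp
      rw [hx, map_sum]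
      calc _ ≤ ∑ i, ‖glCLM g ((inner ℝ (b i) x : ℝ) • (b i : Ed d))‖ := norm_sum_le _ _
        _ ≤ ∑ i : Fin r, ‖x‖ * ‖glCLM g (b i0 : Ed d)‖ := by
            refine Finset.sum_le_sum fun i _ => ?_
            rw [map_smul, norm_smul]
            refine mul_le_mul ?_ (hi0 i (Finset.mem_univ _)) (norm_nonneg _) (norm_nonneg _)
            have := norm_inner_le_norm (𝕜 := ℝ) (b i) x
            have h1 : ‖b i‖ = 1 := b.orthonormal.1 i
            rwa [h1, one_mul] at this
        _ = _ := by simp; ring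
    have := Real.log_le_log (nr_pos hV g) key
    rw [Real.log_mul p.ne' (by positivity)] at this
    unfold rho
    rw [hn i0, Real.log_one]; linarith

lemma UU_le {C : ℝ} (hC : ∀ᵐ g ∂μ, Good C g) {V : Submodule ℝ (Ed d)} (hV : V ≠ ⊥) (β : ℝ) :
    ∃ (s : Finset (Ed d)) (c : ℝ), (∀ e ∈ s, e ∈ V ∧ e ≠ 0) ∧ ∀ n : ℕ,
      (n : ℝ)⁻¹ * UU μ V n ≤ β + c * (n : ℝ)⁻¹ + ∑ e ∈ s, DD μ β n e := by
  obtain ⟨s, c, hc, hs, h⟩ := nr_basis hV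
  refine ⟨s, c, hs, fun n => ?_⟩
  have i1 : ∀ e ∈ s, Integrable (fun g => max (rho g e / n - β) 0) (mconvN μ n) :=
    fun e _ => integrable_pos μ hC β n n e
  have := integral_mono (μ := mconvN μ n) ((integrable_nr μ hC hV n).const_mul (n:ℝ)⁻¹)
    ((integrable_const (β + c * (n:ℝ)⁻¹)).add (integrable_finsetSum _ i1)) (fun g => by
      simp only [Pi.add_apply]
      obtain ⟨e, he, h1⟩ := h g
      have h2 := Finset.single_le_sum (f := fun e => max (rho g e / n - β) 0)
        (fun e _ => le_max_right _ _) he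
      have h3 := (le_max_left (rho g e / n - β) 0).trans h2
      have h4 := mul_le_mul_of_nonneg_left h1 (show (0:ℝ) ≤ (n:ℝ)⁻¹ by positivity)
      rw [div_eq_mul_inv] at h3
      linarith)
  rw [integral_add' (integrable_const _) (integrable_finsetSum _ i1), integral_finsetSum _ i1,
    integral_const_mul] at this
  simpa [UU, DD] using this

lemma L1_le_bb [Nontrivial (Ed d)] {C : ℝ} (hC : ∀ᵐ g ∂μ, Good C g) (hC0 : 0 ≤ C)
    (hqi : QuasiIrreducible μ) : L1 μ ≤ bb μ hC := by
  set β := bb μ hC with hβ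
  by_contra! hlt
  choose nk hnk1 hnk2 using fun k : ℕ =>
    lower_conc μ hC hC0 ((1 / 2 : ℝ) ^ k) (by positivity) (2 ^ k)
  have hpos : ∀ k, 1 ≤ nk k := fun k => Nat.one_le_two_pow.trans (hnk1 k)
  have hs : Summable fun k => (nk k : ℝ)⁻¹ := by
    refine Summable.of_nonneg_of_le (fun k => by positivity) (fun k => ?_) summable_geometric_two
    rw [one_div, inv_pow]
    refine inv_anti₀ (by positivity) ?_
    exact_mod_cast hnk1 k
  obtain ⟨w, hw0, hw⟩ := exists_summable μ hC hC0 nk hpos hnk2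
  set V := slow μ hC β nk hs with hVdef
  have hwV : w ∈ V := Or.inr hw
  have hV : V ≠ ⊥ := fun h => hw0 (by rw [h] at hwV; exact (Submodule.mem_bot ℝ).1 hwV)
  have hinv := slow_inv μ hC hC0 β nk hs
  have hVi : ∀ᵐ h ∂μ, ∀ v ∈ V, glCLM h v ∈ V := by
    filter_upwards [hinv] with h hh v hv
    have : glCLM h v ∈ V.map (glCLM h).toLinearMap := Submodule.mem_map_of_mem hv
    rwa [hh] at this
  have ht := UU_tendsto μ hC hC0 hV hVi
  have hnk : Tendsto nk atTop atTop :=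
    tendsto_atTop_mono hnk1 (tendsto_pow_atTop_atTop_of_one_lt one_lt_two)
  obtain ⟨s, c, hs1, hs2⟩ := UU_le μ hC hV β
  have hlim : Tendsto (fun k => β + c * (nk k : ℝ)⁻¹ + ∑ e ∈ s, DD μ β (nk k) e) atTop
      (nhds (β + c * 0 + ∑ e ∈ s, (0:ℝ))) := by
    refine (tendsto_const_nhds.add (hs.tendsto_atTop_zero.const_mul c)).add
      (tendsto_finsetSum _ fun e he => ?_)
    obtain ⟨h1, h2⟩ := hs1 e he
    exact (h1.resolve_left h2).tendsto_atTop_zero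
  have hle : L1rest μ V ≤ β := by
    have := le_of_tendsto_of_tendsto' (ht.comp hnk) hlim fun k => hs2 (nk k)
    simpa using this
  by_cases htop : V = ⊤
  · rw [htop, L1rest_top] at hle
    linarith
  · exact hqi ⟨V, hV, htop, hinv, by linarith⟩
end rest

theorem uniform_convergence_to_L1
    (d : ℕ) (hd : 2 ≤ d) (S : Set (GLd d)) (hS : IsCompact S)
    (μ₀ : Measure (GLd d)) [IsProbabilityMeasure μ₀] (hμ₀S : μ₀ Sᶜ = 0)
    (hqi : QuasiIrreducible μ₀) (hgap : L2 μ₀ < L1 μ₀) :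
    Tendsto (fun n : ℕ => sSup { x : ℝ | ∃ v : Ed d, ‖v‖ = 1 ∧
        x = |(n : ℝ)⁻¹ * (∫ g, Real.log ‖glCLM g v‖ ∂(mconvN μ₀ n)) - L1 μ₀| })
      atTop (nhds 0) := by
  obtain ⟨C, hC0, hCS⟩ := exists_good S hS
  have hC : ∀ᵐ g ∂μ₀, Good C g := by
    have : ∀ᵐ g ∂μ₀, g ∈ S := by
      rw [ae_iff]; exact hμ₀S
    exact this.mono fun g hg => hCS g hg
  have : Nonempty (Fin d) := ⟨⟨0, by omega⟩⟩
  have hnt : Nontrivial (Ed d) := by infer_instance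
  have hle := L1_le_bb μ₀ hC hC0 hqi
  have htop : (⊤ : Submodule ℝ (Ed d)) ≠ ⊥ := top_ne_bot
  have hu := UU_tendsto μ₀ hC hC0 htop (Eventually.of_forall fun h v _ => trivial)
  rw [L1rest_top] at hu
  have ha := aa_tendsto μ₀ hC hC0
  have hF : ∀ n, ∀ v : Ed d, v ≠ 0 → FF μ₀ n v ≤ UU μ₀ ⊤ n := fun n v hv =>
    integral_mono (integrable_rho μ₀ hC n v) (integrable_nr μ₀ hC htop n)
      (fun g => rho_le_nr htop g trivial hv)
  obtain ⟨w, hw⟩ := exists_ne (0 : Ed d)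
  have hbe : bb μ₀ hC = L1 μ₀ := by
    refine le_antisymm (le_of_tendsto_of_tendsto' ha hu fun n => ?_) hle
    rw [div_eq_mul_inv, mul_comm]
    exact mul_le_mul_of_nonneg_left ((aa_le μ₀ hC n hw).trans (hF n w hw)) (by positivity)
  rw [hbe] at ha
  have hbound : Tendsto (fun n : ℕ => |aa μ₀ n / n - L1 μ₀| + |(n:ℝ)⁻¹ * UU μ₀ ⊤ n - L1 μ₀|)
      atTop (nhds 0) := by
    have h1 := (ha.sub_const (L1 μ₀)).abs.add (hu.sub_const (L1 μ₀)).abs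
    simpa using h1
  refine squeeze_zero (fun n => Real.sSup_nonneg ?_) (fun n => Real.sSup_le ?_ (by positivity)) hbound
  · rintro x ⟨v, -, rfl⟩
    exact abs_nonneg _
  · rintro x ⟨v, hv, rfl⟩
    have hv0 : v ≠ 0 := fun h => by simp [h] at hv
    have e : ∫ g, Real.log ‖glCLM g v‖ ∂(mconvN μ₀ n) = FF μ₀ n v := by
      simp [FF, rho, hv]
    rw [e]
    have hn : (0:ℝ) ≤ (n:ℝ)⁻¹ := by positivity
    have l1 := mul_le_mul_of_nonneg_left (aa_le μ₀ hC n hv0) hn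
    have l2 := mul_le_mul_of_nonneg_left (hF n v hv0) hn
    rw [div_eq_mul_inv, mul_comm (aa μ₀ n)]
    rw [abs_le]
    constructor
    · linarith [neg_abs_le ((n:ℝ)⁻¹ * aa μ₀ n - L1 μ₀),
        abs_nonneg ((n:ℝ)⁻¹ * UU μ₀ ⊤ n - L1 μ₀)]
    · linarith [le_abs_self ((n:ℝ)⁻¹ * UU μ₀ ⊤ n - L1 μ₀),
        abs_nonneg ((n:ℝ)⁻¹ * aa μ₀ n - L1 μ₀)]

end
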